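/- Let σ : ℝ → ℝ be continuous with σ(s) ≥ 0 for all s ∈ [a, b], and let a ≤ t₁ < t₂ ≤ b with ∫_{t₁}^{t₂} σ(s) ds > 0. Define κ₊(t) = exp(−∫_t^b σ(s) ds) and κ₋(t) = exp(−∫_a^t σ(s) ds). Then κ₊(t₁)·κ₋(t₂) − κ₋(t₁)·κ₊(t₂) < 0; in particular, the determinant of the 2×2 matrix [[κ₊(t₁), κ₊(t₂)], [κ₋(t₁), κ₋(t₂)]] is nonzero. -/

import Mathlib

/-!
Attenuating from `t₁` to `b` and from `t₂` back to `a` crosses `[a, b]` once and `[t₁, t₂]` a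
second time, so `κ₊(t₁) κ₋(t₂) = exp (-(A + I))` with `A = ∫_a^b σ` and `I = ∫_{t₁}^{t₂} σ`.
Exchanging `t₁` and `t₂` only changes the sign of `I`, so the determinant is `-2 exp (-A) sinh I`.
-/

section AttenuationWeights

open MeasureTheory intervalIntegral

/-- The weight `κ₊` of the attenuated X-ray transform in the forward direction: the attenuation
from `t` to the endpoint `b`. Length along the geodesic is measured by `μ`, which is Lebesgue
measure in the classical transform. -/
noncomputable def forwardAttenuationWeight (μ : Measure ℝ) (σ : ℝ → ℝ) (b t : ℝ) : ℝ :=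
  Real.exp (-∫ s in t..b, σ s ∂μ)

/-- The weight `κ₋` of the attenuated X-ray transform in the reversed direction: the attenuation
from `t` back to the endpoint `a`, with `μ` as in `forwardAttenuationWeight`. -/
noncomputable def reversedAttenuationWeight (μ : Measure ℝ) (σ : ℝ → ℝ) (a t : ℝ) : ℝ :=
  Real.exp (-∫ s in a..t, σ s ∂μ)

variable {μ : Measure ℝ} {σ : ℝ → ℝ} {a b t₁ t₂ : ℝ}

theorem forwardAttenuationWeight_mul_reversedAttenuationWeight
    (hat₁ : IntervalIntegrable σ μ a t₁) (hat₂ : IntervalIntegrable σ μ a t₂)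
    (ht₁b : IntervalIntegrable σ μ t₁ b) :
    forwardAttenuationWeight μ σ b t₁ * reversedAttenuationWeight μ σ a t₂ =
      Real.exp (-∫ s in a..b, σ s ∂μ) * Real.exp (-∫ s in t₁..t₂, σ s ∂μ) := by
  have regroup : (∫ s in a..t₂, σ s ∂μ) + ∫ s in t₁..b, σ s ∂μ =
      (∫ s in a..b, σ s ∂μ) + ∫ s in t₁..t₂, σ s ∂μ :=
    integral_interval_add_interval_comm hat₂ ht₁b hat₁
  rw [forwardAttenuationWeight, reversedAttenuationWeight, ← Real.exp_add, ← Real.exp_add,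
    ← neg_add, ← neg_add, add_comm, regroup]

theorem det_attenuationWeights
    (hat₁ : IntervalIntegrable σ μ a t₁) (ht₁t₂ : IntervalIntegrable σ μ t₁ t₂)
    (ht₂b : IntervalIntegrable σ μ t₂ b) :
    Matrix.det !![forwardAttenuationWeight μ σ b t₁, forwardAttenuationWeight μ σ b t₂;
        reversedAttenuationWeight μ σ a t₁, reversedAttenuationWeight μ σ a t₂] =
      -2 * Real.exp (-∫ s in a..b, σ s ∂μ) * Real.sinh (∫ s in t₁..t₂, σ s ∂μ) := by
  have hat₂ : IntervalIntegrable σ μ a t₂ := hat₁.trans ht₁t₂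
  have ht₁b : IntervalIntegrable σ μ t₁ b := ht₁t₂.trans ht₂b
  rw [Matrix.det_fin_two_of,
    forwardAttenuationWeight_mul_reversedAttenuationWeight hat₁ hat₂ ht₁b,
    forwardAttenuationWeight_mul_reversedAttenuationWeight hat₂ hat₁ ht₂b,
    integral_symm t₁ t₂, neg_neg, Real.sinh_eq]
  ring

theorem attenuated_weights_determinant_neg_general
    (hat₁ : IntervalIntegrable σ μ a t₁) (ht₂b : IntervalIntegrable σ μ t₂ b)
    (hpos : 0 < ∫ s in t₁..t₂, σ s ∂μ) :
    forwardAttenuationWeight μ σ b t₁ * reversedAttenuationWeight μ σ a t₂ -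
        reversedAttenuationWeight μ σ a t₁ * forwardAttenuationWeight μ σ b t₂ < 0 ∧
      Matrix.det !![forwardAttenuationWeight μ σ b t₁, forwardAttenuationWeight μ σ b t₂;
        reversedAttenuationWeight μ σ a t₁, reversedAttenuationWeight μ σ a t₂] ≠ 0 := by
  -- A non-integrable `σ` would have integral `0` by convention.
  have ht₁t₂ : IntervalIntegrable σ μ t₁ t₂ := intervalIntegrable_of_integral_ne_zero hpos.ne'
  have det_neg : Matrix.det
      !![forwardAttenuationWeight μ σ b t₁, forwardAttenuationWeight μ σ b t₂;
        reversedAttenuationWeight μ σ a t₁, reversedAttenuationWeight μ σ a t₂] < 0 := by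
    rw [det_attenuationWeights hat₁ ht₁t₂ ht₂b]
    exact mul_neg_of_neg_of_pos (mul_neg_of_neg_of_pos (by norm_num) (Real.exp_pos _))
      (Real.sinh_pos_iff.mpr hpos)
  refine ⟨?_, det_neg.ne⟩
  rwa [Matrix.det_fin_two_of, mul_comm (forwardAttenuationWeight μ σ b t₂)] at det_neg

end AttenuationWeights

/-- For the attenuated X-ray transform with attenuation `σ ≥ 0` along a geodesic with
parameter interval `[a, b]`, the weights `κ₊(t) = exp(−∫_t^b σ)` and
`κ₋(t) = exp(−∫_a^t σ)` satisfy `κ₊(t₁) κ₋(t₂) − κ₋(t₁) κ₊(t₂) < 0` whenever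
`a ≤ t₁ < t₂ ≤ b` and `∫_{t₁}^{t₂} σ > 0`; in particular the determinant of
`[[κ₊(t₁), κ₊(t₂)], [κ₋(t₁), κ₋(t₂)]]` is nonzero (condition (R1)). -/
theorem attenuated_weights_determinant_neg (σ : ℝ → ℝ) (hσcont : Continuous σ)
    (a b t₁ t₂ : ℝ) (hσ : ∀ s ∈ Set.Icc a b, 0 ≤ σ s)
    (hat : a ≤ t₁) (h12 : t₁ < t₂) (htb : t₂ ≤ b)
    (hpos : 0 < ∫ s in t₁..t₂, σ s)
    (κp κm : ℝ → ℝ)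
    (hκp : ∀ t : ℝ, κp t = Real.exp (-∫ s in t..b, σ s))
    (hκm : ∀ t : ℝ, κm t = Real.exp (-∫ s in a..t, σ s)) :
    κp t₁ * κm t₂ - κm t₁ * κp t₂ < 0 ∧
    Matrix.det !![κp t₁, κp t₂; κm t₁, κm t₂] ≠ 0 := by
  obtain ⟨rfl, rfl⟩ : κp = forwardAttenuationWeight MeasureTheory.volume σ b ∧
      κm = reversedAttenuationWeight MeasureTheory.volume σ a := ⟨funext hκp, funext hκm⟩
  exact attenuated_weights_determinant_neg_general
    (hσcont.intervalIntegrable a t₁) (hσcont.intervalIntegrable t₂ b) hpos
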